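/- arXiv:1703.04243 — 2 statements merged into one kernel-verified Lean document; each statement's English description precedes it below -/
import Mathlib

section
/- Let n ≥ 2 be an even integer and let ρ > 1 satisfy a_{n+1}(ρ) ≥ (n+1) a_1(ρ), where a_k(ρ) = (ρ^k + ρ^{−k})/2 (this holds precisely when ρ ≥ ρ_n*, the unique root in (1,∞) of a_{n+1}(ρ) = (n+1)a_1(ρ)). Then min_{z ∈ E_ρ} |U_n(z)| = (ρ^{n+1} + ρ^{−n−1})/(ρ + ρ⁻¹), and the minimum is attained if and only if z = ± i(ρ − ρ⁻¹)/2, i.e. exactly at the two endpoints of the minor axis of the Bernstein ellipse. -/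
/-- `a_k(ρ) = (ρ^k + ρ^{-k})/2`. -/
noncomputable def aCoef (k : ℕ) (ρ : ℝ) : ℝ := (ρ ^ k + ρ⁻¹ ^ k) / 2

/-- The Bernstein ellipse `E_ρ`: the set of points `z = (u + u⁻¹)/2` with `|u| = ρ`. -/
def bernsteinEllipse (ρ : ℝ) : Set ℂ :=
  {z : ℂ | ∃ u : ℂ, ‖u‖ = ρ ∧ z = (u + u⁻¹) / 2}

/-!
The points of `E_ρ` are `sin w` with `w = x + i y`, `x` real and `y = log ρ`, and the ends of the
minor axis are those with `sin x = 0`. For even `n` and `N = n + 1`,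
`|U_n(sin w)| = |cos (N w)| / |cos w|`, where `|cos (x + i y)|² = cosh² y - sin² x`. So
`|U_n(sin w)| ≥ cosh (N y) / cosh y` is equivalent to
`cosh y * |sin (N x)| ≤ cosh (N y) * |sin x|`, which follows from `|sin (N x)| ≤ N |sin x|` and the
hypothesis `N cosh y ≤ cosh (N y)`, with strict inequality unless `sin x = 0`.
-/

lemma abs_sin_add_one_mul_le (t x : ℝ) :
    |Real.sin ((t + 1) * x)| ≤ |Real.sin (t * x)| * |Real.cos x| + |Real.sin x| := by
  calc |Real.sin ((t + 1) * x)|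
      = |Real.sin (t * x) * Real.cos x + Real.cos (t * x) * Real.sin x| := by
        rw [add_mul, one_mul, Real.sin_add]
    _ ≤ |Real.sin (t * x)| * |Real.cos x| + |Real.cos (t * x)| * |Real.sin x| := by
        rw [← abs_mul, ← abs_mul]
        exact abs_add_le _ _
    _ ≤ |Real.sin (t * x)| * |Real.cos x| + |Real.sin x| := by
        gcongr
        exact mul_le_of_le_one_left (abs_nonneg _) (Real.abs_cos_le_one _)

lemma abs_sin_nat_mul_le (n : ℕ) (x : ℝ) : |Real.sin (n * x)| ≤ n * |Real.sin x| := by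
  induction n with
  | zero => simp
  | succ n ih =>
    push_cast
    calc |Real.sin ((n + 1) * x)|
        ≤ |Real.sin (n * x)| * |Real.cos x| + |Real.sin x| := abs_sin_add_one_mul_le n x
      _ ≤ |Real.sin (n * x)| + |Real.sin x| := by
          gcongr
          exact mul_le_of_le_one_right (abs_nonneg _) (Real.abs_cos_le_one x)
      _ ≤ (n + 1) * |Real.sin x| := by linarith

lemma abs_cos_lt_one_of_sin_ne_zero {x : ℝ} (hx : Real.sin x ≠ 0) : |Real.cos x| < 1 := by
  rw [← sq_lt_one_iff_abs_lt_one, Real.cos_sq']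
  exact sub_lt_self 1 (sq_pos_of_ne_zero hx)

lemma abs_sin_nat_mul_lt {n : ℕ} {x : ℝ} (hn : 2 ≤ n) (hx : Real.sin x ≠ 0) :
    |Real.sin (n * x)| < n * |Real.sin x| := by
  obtain ⟨m, rfl⟩ : ∃ m, n = m + 1 := ⟨n - 1, by lia⟩
  have hm : (0 : ℝ) < m := by exact_mod_cast (by lia : 0 < m)
  have hsin : 0 < |Real.sin x| := abs_pos.mpr hx
  push_cast
  calc |Real.sin ((m + 1) * x)|
      ≤ |Real.sin (m * x)| * |Real.cos x| + |Real.sin x| := abs_sin_add_one_mul_le m x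
    _ ≤ m * |Real.sin x| * |Real.cos x| + |Real.sin x| := by
        gcongr
        exact abs_sin_nat_mul_le m x
    _ < m * |Real.sin x| + |Real.sin x| := by
        gcongr ?_ + _
        exact mul_lt_of_lt_one_right (mul_pos hm hsin) (abs_cos_lt_one_of_sin_ne_zero hx)
    _ = (m + 1) * |Real.sin x| := by ring

lemma sq_norm_cos (w : ℂ) :
    ‖Complex.cos w‖ ^ 2 = Real.cosh w.im ^ 2 - Real.sin w.re ^ 2 := by
  have hcos : Complex.cos w = (Real.cos w.re * Real.cosh w.im : ℝ) +
      (-(Real.sin w.re * Real.sinh w.im) : ℝ) * Complex.I := by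
    rw [Complex.cos_eq]
    push_cast
    ring
  rw [hcos, Complex.sq_norm, Complex.normSq_add_mul_I]
  linear_combination
    Real.cosh w.im ^ 2 * Real.sin_sq_add_cos_sq w.re - Real.sin w.re ^ 2 * Real.cosh_sq w.im

lemma norm_cos_of_sin_re_eq_zero {w : ℂ} (hw : Real.sin w.re = 0) :
    ‖Complex.cos w‖ = Real.cosh w.im := by
  rw [← pow_left_inj₀ (norm_nonneg _) (Real.cosh_pos _).le two_ne_zero, sq_norm_cos, hw]
  ring

lemma cosh_mul_norm_cos_lt {N : ℕ} {w : ℂ} (hN : 2 ≤ N)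
    (him : N * Real.cosh w.im ≤ Real.cosh (N * w.im)) (hre : Real.sin w.re ≠ 0) :
    Real.cosh (N * w.im) * ‖Complex.cos w‖ < ‖Complex.cos (N * w)‖ * Real.cosh w.im := by
  have hsin : Real.cosh w.im * |Real.sin (N * w.re)| < Real.cosh (N * w.im) * |Real.sin w.re| :=
    calc Real.cosh w.im * |Real.sin (N * w.re)|
        < Real.cosh w.im * (N * |Real.sin w.re|) :=
          mul_lt_mul_of_pos_left (abs_sin_nat_mul_lt hN hre) (Real.cosh_pos _)
      _ = N * Real.cosh w.im * |Real.sin w.re| := by ring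
      _ ≤ Real.cosh (N * w.im) * |Real.sin w.re| := by gcongr
  have hsin_sq :
      (Real.cosh w.im * Real.sin (N * w.re)) ^ 2 < (Real.cosh (N * w.im) * Real.sin w.re) ^ 2 := by
    rwa [sq_lt_sq, abs_mul, abs_mul, abs_of_pos (Real.cosh_pos _), abs_of_pos (Real.cosh_pos _)]
  refine lt_of_pow_lt_pow_left₀ 2 (mul_nonneg (norm_nonneg _) (Real.cosh_pos _).le) ?_
  rw [mul_pow, mul_pow, sq_norm_cos, sq_norm_cos, ← Complex.ofReal_natCast,
    Complex.re_ofReal_mul, Complex.im_ofReal_mul]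
  linarith

lemma sin_eq_I_mul_sinh_im_or_neg_iff {w : ℂ} :
    Complex.sin w = Complex.I * Real.sinh w.im ∨ Complex.sin w = -(Complex.I * Real.sinh w.im) ↔
      Real.sin w.re = 0 := by
  have hsin : Complex.sin w = (Real.sin w.re * Real.cosh w.im : ℝ) +
      (Real.cos w.re * Real.sinh w.im : ℝ) * Complex.I := by
    rw [Complex.sin_eq]
    push_cast
    rfl
  constructor
  · intro h
    have hre : (Complex.sin w).re = 0 := by
      rcases h with h | h <;> simp [h]
    have hprod : Real.sin w.re * Real.cosh w.im = 0 := by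
      simpa only [hsin, ← Complex.mk_eq_add_mul_I] using hre
    exact (mul_eq_zero.mp hprod).resolve_right (Real.cosh_pos _).ne'
  · intro h
    refine (Real.sin_eq_zero_iff_cos_eq.mp h).imp (fun hcos => ?_) (fun hcos => ?_) <;>
    · rw [hsin, h, hcos]
      push_cast
      ring

lemma norm_eval_U_sin_mul_norm_cos {n : ℕ} (hn : Even n) (w : ℂ) :
    ‖(Polynomial.Chebyshev.U ℂ n).eval (Complex.sin w)‖ * ‖Complex.cos w‖ =
      ‖Complex.cos ((n + 1 : ℕ) * w)‖ := by
  obtain ⟨k, rfl⟩ := hn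
  have hangle : (((k + k : ℕ) : ℤ) + 1 : ℂ) * (Real.pi / 2 - w) =
      Real.pi / 2 - (k + k + 1 : ℕ) * w + k * Real.pi := by
    push_cast
    ring
  have hU := Polynomial.Chebyshev.U_complex_cos (Real.pi / 2 - w) (k + k : ℕ)
  rw [hangle, Complex.sin_antiperiodic.add_nat_mul_eq, Complex.cos_pi_div_two_sub,
    Complex.sin_pi_div_two_sub, Complex.sin_pi_div_two_sub] at hU
  simpa using congrArg norm hU

section ChebyshevU

variable {n : ℕ} {w : ℂ}

lemma norm_eval_U_sin_of_sin_re_eq_zero (hn : Even n) (hre : Real.sin w.re = 0) :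
    ‖(Polynomial.Chebyshev.U ℂ n).eval (Complex.sin w)‖ =
      Real.cosh ((n + 1 : ℕ) * w.im) / Real.cosh w.im := by
  have hmul_re : Real.sin ((n + 1 : ℕ) * w : ℂ).re = 0 := by
    rw [← Complex.ofReal_natCast, Complex.re_ofReal_mul]
    simpa [hre] using abs_sin_nat_mul_le (n + 1) w.re
  rw [eq_div_iff (Real.cosh_pos _).ne', ← norm_cos_of_sin_re_eq_zero hre,
    norm_eval_U_sin_mul_norm_cos hn, norm_cos_of_sin_re_eq_zero hmul_re,
    ← Complex.ofReal_natCast, Complex.im_ofReal_mul]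

lemma cosh_div_cosh_lt_norm_eval_U_sin (hn : Even n) (hn₀ : n ≠ 0)
    (him : (n + 1 : ℕ) * Real.cosh w.im ≤ Real.cosh ((n + 1 : ℕ) * w.im))
    (hre : Real.sin w.re ≠ 0) :
    Real.cosh ((n + 1 : ℕ) * w.im) / Real.cosh w.im <
      ‖(Polynomial.Chebyshev.U ℂ n).eval (Complex.sin w)‖ := by
  rw [div_lt_iff₀ (Real.cosh_pos _)]
  refine lt_of_mul_lt_mul_right ?_ (norm_nonneg (Complex.cos w))
  rw [mul_right_comm, norm_eval_U_sin_mul_norm_cos hn]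
  exact cosh_mul_norm_cos_lt (by lia) him hre

end ChebyshevU

section BernsteinEllipse

variable {ρ : ℝ}

lemma aCoef_eq_cosh (k : ℕ) (hρ : 0 < ρ) : aCoef k ρ = Real.cosh (k * Real.log ρ) := by
  rw [aCoef, Real.cosh_eq, Real.exp_neg, Real.exp_nat_mul, Real.exp_log hρ, inv_pow]

lemma exists_sin_eq_of_mem_bernsteinEllipse {z : ℂ} (hρ : ρ ≠ 0) (hz : z ∈ bernsteinEllipse ρ) :
    ∃ w : ℂ, w.im = Real.log ρ ∧ Complex.sin w = z := by
  obtain ⟨u, rfl, rfl⟩ := hz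
  have hu : u ≠ 0 := norm_ne_zero_iff.mp hρ
  refine ⟨Complex.log u * Complex.I + Real.pi / 2, by simp [Complex.log_re], ?_⟩
  rw [Complex.sin_add_pi_div_two, Complex.cos_mul_I, Complex.cosh, Complex.exp_neg,
    Complex.exp_log hu]

end BernsteinEllipse

/-- for even `n ≥ 2` and `ρ > 1` with `a_{n+1}(ρ) ≥ (n+1) a_1(ρ)`,
`min_{z ∈ E_ρ} |U_n(z)| = (ρ^{n+1} + ρ^{-(n+1)})/(ρ + ρ⁻¹)`, attained if and only if
`z = ± i(ρ - ρ⁻¹)/2`, the two endpoints of the minor axis. -/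
theorem chebyshevU_min_even
    (n : ℕ) (hn : 2 ≤ n) (heven : Even n) (ρ : ℝ) (hρ : 1 < ρ)
    (hρn : (n + 1 : ℝ) * aCoef 1 ρ ≤ aCoef (n + 1) ρ) :
    ∀ z ∈ bernsteinEllipse ρ,
      (ρ ^ (n + 1) + ρ⁻¹ ^ (n + 1)) / (ρ + ρ⁻¹) ≤
        ‖(Polynomial.Chebyshev.U ℂ (n : ℤ)).eval z‖ ∧
      (‖(Polynomial.Chebyshev.U ℂ (n : ℤ)).eval z‖ =
          (ρ ^ (n + 1) + ρ⁻¹ ^ (n + 1)) / (ρ + ρ⁻¹) ↔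
        z = Complex.I * (((ρ - ρ⁻¹) / 2 : ℝ) : ℂ) ∨
        z = -(Complex.I * (((ρ - ρ⁻¹) / 2 : ℝ) : ℂ))) := by
  intro z hz
  have hρ₀ : 0 < ρ := one_pos.trans hρ
  obtain ⟨w, him, rfl⟩ := exists_sin_eq_of_mem_bernsteinEllipse hρ₀.ne' hz
  have hmin : (ρ ^ (n + 1) + ρ⁻¹ ^ (n + 1)) / (ρ + ρ⁻¹) =
      Real.cosh ((n + 1 : ℕ) * w.im) / Real.cosh w.im := by
    rw [him, ← aCoef_eq_cosh _ hρ₀, aCoef, Real.cosh_log hρ₀,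
      div_div_div_cancel_right₀ two_ne_zero]
  rw [hmin, ← Real.sinh_log hρ₀, ← him, sin_eq_I_mul_sinh_im_or_neg_iff]
  by_cases hre : Real.sin w.re = 0
  · have hU := norm_eval_U_sin_of_sin_re_eq_zero heven hre
    exact ⟨hU.ge, iff_of_true hU hre⟩
  · rw [aCoef_eq_cosh _ hρ₀, aCoef_eq_cosh _ hρ₀, Nat.cast_one, one_mul, ← him] at hρn
    have hU := cosh_div_cosh_lt_norm_eval_U_sin heven (by lia) (by exact_mod_cast hρn) hre
    exact ⟨hU.le, iff_of_false hU.ne' hre⟩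
end

section
/- Let α, β > −1 and let u be a complex number with |u| = ρ > 1, and set z = (u + u⁻¹)/2. Then lim_{n→∞} [√(nπ) · P_n^{(α,β)}(z) / (2^{α+β} u^n)] = (1 − u⁻¹)^{−α−1/2} (1 + u⁻¹)^{−β−1/2}, where the complex powers are taken with the principal branch (note that 1 ± u⁻¹ lie in the right half-plane since |u⁻¹| < 1). -/
open Finset

/-- Pochhammer symbol `(a)_j = a (a+1) ⋯ (a+j-1)`. -/
noncomputable def poch (a : ℝ) (j : ℕ) : ℝ := ∏ i ∈ Finset.range j, (a + i)

/-- Generalized binomial coefficient `binom(a, m) = a (a-1) ⋯ (a-m+1) / m!`. -/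
noncomputable def gbinom (a : ℝ) (m : ℕ) : ℝ :=
  (∏ i ∈ Finset.range m, (a - i)) / (Nat.factorial m)

/-- Jacobi polynomial `P_n^{(α,β)}(x)` of a real variable. -/
noncomputable def jacobiP (α β : ℝ) (n : ℕ) (x : ℝ) : ℝ :=
  (1 / 2 ^ n) * ∑ k ∈ Finset.range (n + 1),
    gbinom ((n : ℝ) + α) (n - k) * gbinom ((n : ℝ) + β) k * (x - 1) ^ k * (x + 1) ^ (n - k)

/-- Jacobi polynomial `P_n^{(α,β)}(z)` of a complex variable. -/
noncomputable def jacobiC (α β : ℝ) (n : ℕ) (z : ℂ) : ℂ :=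
  (1 / 2 ^ n) * ∑ k ∈ Finset.range (n + 1),
    ((gbinom ((n : ℝ) + α) (n - k) * gbinom ((n : ℝ) + β) k : ℝ) : ℂ) *
      (z - 1) ^ k * (z + 1) ^ (n - k)

/-- Chebyshev-connection coefficients `d_{k,n}`, given by a terminating ₃F₂ sum. -/
noncomputable def dCoeff (α β : ℝ) (n k : ℕ) : ℝ :=
  (poch ((n : ℝ) + α + β + 1) k * poch ((k : ℝ) + α + 1) (n - k)) /
      ((Nat.factorial (n - k)) * 2 ^ (2 * k) * (Nat.factorial k)) *
    ∑ j ∈ Finset.range (n - k + 1),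
      (poch ((k : ℝ) - n) j * poch ((n : ℝ) + k + α + β + 1) j * poch ((k : ℝ) + 1 / 2) j) /
        (poch ((k : ℝ) + α + 1) j * poch (2 * (k : ℝ) + 1) j * (Nat.factorial j))

open Filter Topology

/-!
Write `v = u⁻¹`. Then `P_n^{(α,β)}((u + u⁻¹)/2) = (u/4)^n Q_n(v)` with `Q_n` a palindromic
polynomial of degree at most `2n`, and the Jacobi differential equation becomes a three-term
recurrence for the coefficients of `Q_n`. Divided by `2n`, this recurrence converges as `n → ∞` to
the one satisfied by the Taylor coefficients of `(1 - v)^(-α-1/2) (1 + v)^(-β-1/2)`, while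
Vandermonde's identity and Stirling's formula give `√(nπ) Q_n(0) / 4^n → 2^(α+β)`; so the normalised
coefficients converge one by one. Up to the middle index `n` the recurrence also bounds them by
`M (1 + 2ε)^k` with `M` independent of `n`, and palindromicity carries this bound to the other half,
where the leading factor of the recurrence may vanish. Dominated convergence then gives the limit of
the sums for `|v| < 1`.
-/

section GeneralizedBinomial

theorem succ_mul_ringChoose_succ {R : Type*} [CommRing R] [BinomialRing R] (r : R) (m : ℕ) :
    ((m : R) + 1) * Ring.choose r (m + 1) = (r - m) * Ring.choose r m := by
  have h := Ring.choose_smul_choose r m.le_succ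
  rw [Nat.succ_eq_add_one, Nat.choose_succ_self_right, Nat.add_sub_cancel_left,
    Ring.choose_one_right, nsmul_eq_mul] at h
  push_cast at h
  rw [h, mul_comm]

theorem gbinom_eq_ringChoose (a : ℝ) (m : ℕ) : gbinom a m = Ring.choose a m := by
  have h := Ring.descPochhammer_eq_factorial_smul_choose a m
  rw [← Polynomial.aeval_eq_smeval, Polynomial.aeval_def, ← Polynomial.eval_map,
    descPochhammer_map, descPochhammer_eval_eq_prod_range, nsmul_eq_mul] at h
  rw [gbinom, h, mul_div_cancel_left₀ _ (by positivity)]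

theorem sum_gbinom_mul_gbinom (a b : ℝ) (n : ℕ) :
    ∑ k ∈ range (n + 1), gbinom a (n - k) * gbinom b k = gbinom (a + b) n := by
  simp only [gbinom_eq_ringChoose]
  rw [add_comm a b, Ring.add_choose_eq n (Commute.all b a),
    Nat.sum_antidiagonal_eq_sum_range_succ_mk]
  exact sum_congr rfl fun k _ => mul_comm _ _

theorem abs_log_one_add_sub_self_le {x : ℝ} (hx : |x| ≤ 1 / 2) :
    |Real.log (1 + x) - x| ≤ 2 * x ^ 2 := by
  have hlt : |-x| < 1 := by rw [abs_neg]; linarith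
  have h := Real.abs_log_sub_add_sum_range_le hlt 1
  simp only [sum_range_one, abs_neg, sub_neg_eq_add] at h
  calc |Real.log (1 + x) - x| ≤ x ^ 2 / (1 - |x|) := by
        rw [← sq_abs x]
        convert h using 2
        norm_num
        ring
    _ ≤ 2 * x ^ 2 := by
        rw [div_le_iff₀ (by linarith)]
        nlinarith [sq_nonneg x]

theorem tendsto_prod_one_add_exp {ι κ : Type*} {l : Filter ι} {s : ι → Finset κ}
    {f : ι → κ → ℝ} {a : ℝ} (hsum : Tendsto (fun i => ∑ j ∈ s i, f i j) l (𝓝 a))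
    (hsq : Tendsto (fun i => ∑ j ∈ s i, f i j ^ 2) l (𝓝 0)) :
    Tendsto (fun i => ∏ j ∈ s i, (1 + f i j)) l (𝓝 (Real.exp a)) := by
  have hsmall : ∀ᶠ i in l, ∀ j ∈ s i, |f i j| ≤ 1 / 2 := by
    filter_upwards [hsq.eventually_le_const (show (0 : ℝ) < (1 / 2) ^ 2 by norm_num)] with i hi j hj
    have hj' := single_le_sum (f := fun j => f i j ^ 2) (fun j _ => sq_nonneg _) hj
    exact abs_le_of_sq_le_sq (hj'.trans hi) (by norm_num)
  have hlog : Tendsto (fun i => ∑ j ∈ s i, Real.log (1 + f i j)) l (𝓝 a) := by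
    refine tendsto_of_tendsto_of_dist hsum
      (squeeze_zero' (.of_forall fun _ => dist_nonneg) ?_ (by simpa using hsq.const_mul 2))
    filter_upwards [hsmall] with i hi
    rw [dist_comm, Real.dist_eq, ← sum_sub_distrib, mul_sum]
    exact (abs_sum_le_sum_abs _ _).trans
      (sum_le_sum fun j hj => abs_log_one_add_sub_self_le (hi j hj))
  refine ((Real.continuous_exp.tendsto a).comp hlog).congr' ?_
  filter_upwards [hsmall] with i hi
  rw [Function.comp_apply, Real.exp_sum]
  exact prod_congr rfl fun j hj => Real.exp_log (by linarith [(abs_le.1 (hi j hj)).1])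

theorem sum_inv_two_mul_sub (n : ℕ) :
    ∑ i ∈ range n, (2 * (n : ℝ) - i)⁻¹ = harmonic (2 * n) - harmonic n := by
  have hsplit : (harmonic (2 * n) : ℝ) = harmonic n + ∑ i ∈ range n, ((n : ℝ) + i + 1)⁻¹ := by
    simp only [harmonic, two_mul, sum_range_add]
    push_cast
    rfl
  rw [hsplit, add_sub_cancel_left, ← sum_range_reflect]
  refine sum_congr rfl fun i hi => ?_
  rw [Nat.sub_sub, Nat.cast_sub (by have := mem_range.1 hi; omega)]
  push_cast
  ring

theorem tendsto_two_mul_atTop : Tendsto (fun n : ℕ => 2 * n) atTop atTop :=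
  tendsto_id.const_mul_atTop' two_pos

theorem tendsto_sum_inv_two_mul_sub :
    Tendsto (fun n : ℕ => ∑ i ∈ range n, (2 * (n : ℝ) - i)⁻¹) atTop (𝓝 (Real.log 2)) := by
  have hlim := ((Real.tendsto_harmonic_sub_log.comp tendsto_two_mul_atTop).sub
    Real.tendsto_harmonic_sub_log).add_const (Real.log 2)
  rw [sub_self, zero_add] at hlim
  refine hlim.congr' ?_
  filter_upwards [eventually_ne_atTop 0] with n hn
  rw [sum_inv_two_mul_sub, Function.comp_apply, Nat.cast_mul, Nat.cast_ofNat,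
    Real.log_mul two_ne_zero (by exact_mod_cast hn)]
  ring

theorem tendsto_sum_sq_div_two_mul_sub (c : ℝ) :
    Tendsto (fun n : ℕ => ∑ i ∈ range n, (c * (2 * (n : ℝ) - i)⁻¹) ^ 2) atTop (𝓝 0) := by
  refine squeeze_zero' (.of_forall fun n => sum_nonneg fun i _ => sq_nonneg _) ?_
    (tendsto_const_div_atTop_nhds_zero_nat (c ^ 2))
  filter_upwards [eventually_gt_atTop 0] with n hn
  have hn' : (0 : ℝ) < n := by exact_mod_cast hn
  calc ∑ i ∈ range n, (c * (2 * (n : ℝ) - i)⁻¹) ^ 2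
      ≤ ∑ _i ∈ range n, c ^ 2 * ((n : ℝ)⁻¹) ^ 2 := by
        refine sum_le_sum fun i hi => ?_
        have hi' : (i : ℝ) ≤ n := by exact_mod_cast (mem_range.1 hi).le
        rw [mul_pow]
        gcongr
        · exact inv_nonneg.2 (by linarith)
        · linarith
    _ = c ^ 2 / n := by
        rw [sum_const, card_range, nsmul_eq_mul]
        field_simp

theorem gbinom_two_mul_add (c : ℝ) (n : ℕ) :
    gbinom (2 * n + c) n =
      n.centralBinom * ∏ i ∈ range n, (1 + c * (2 * (n : ℝ) - i)⁻¹) := by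
  have hne : ∀ i ∈ range n, 2 * (n : ℝ) - i ≠ 0 := fun i hi => by
    have : (i : ℝ) < n := by exact_mod_cast mem_range.1 hi
    linarith
  have hcentral : (n.centralBinom : ℝ) = gbinom (2 * n) n := by
    rw [gbinom_eq_ringChoose, ← Nat.cast_ofNat, ← Nat.cast_mul, Ring.choose_natCast,
      Nat.centralBinom]
  rw [hcentral, gbinom, gbinom, div_mul_eq_mul_div, ← prod_mul_distrib]
  congr 1
  refine prod_congr rfl fun i hi => ?_
  field_simp [hne i hi]
  ring

theorem stirlingSeq_two_mul_div_sq {n : ℕ} (hn : n ≠ 0) :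
    Stirling.stirlingSeq (2 * n) / Stirling.stirlingSeq n ^ 2 = √n * n.centralBinom / 4 ^ n := by
  have hn' : (0 : ℝ) < n := by positivity
  have hfact : ((2 * n).factorial : ℝ) = n.centralBinom * (n.factorial : ℝ) ^ 2 := by
    have h := Nat.choose_mul_factorial_mul_factorial (show n ≤ 2 * n by omega)
    rw [show 2 * n - n = n by omega, ← Nat.centralBinom_eq_two_mul_choose] at h
    rw [← h]
    push_cast
    ring
  have hsqrt : √(2 * (2 * (n : ℝ))) = 2 * √n := by
    rw [← mul_assoc, Real.sqrt_mul (by norm_num), Real.sqrt_mul_self two_pos.le]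
  have hpow : ((2 : ℝ) * n / Real.exp 1) ^ (2 * n) = 4 ^ n * ((n / Real.exp 1) ^ n) ^ 2 := by
    rw [← pow_mul, mul_comm n 2, mul_div_assoc, mul_pow, pow_mul 2 2 n]
    norm_num
  simp only [Stirling.stirlingSeq, Nat.cast_mul, Nat.cast_ofNat]
  rw [hfact, hsqrt, hpow, div_pow (n.factorial : ℝ), mul_pow √(2 * (n : ℝ)),
    Real.sq_sqrt (by positivity)]
  field_simp
  rw [Real.sq_sqrt hn'.le]

theorem tendsto_sqrt_mul_centralBinom_div :
    Tendsto (fun n : ℕ => √(n * Real.pi) * n.centralBinom / 4 ^ n) atTop (𝓝 1) := by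
  have hpi : √Real.pi ≠ 0 := by positivity
  have hstirling := Stirling.tendsto_stirlingSeq_sqrt_pi
  have hlim := ((hstirling.comp tendsto_two_mul_atTop).div (hstirling.pow 2)
    (pow_ne_zero 2 hpi)).const_mul √Real.pi
  rw [show √Real.pi * (√Real.pi / √Real.pi ^ 2) = 1 by field_simp] at hlim
  refine hlim.congr' ?_
  filter_upwards [eventually_ne_atTop 0] with n hn
  rw [Pi.div_apply, Function.comp_apply, stirlingSeq_two_mul_div_sq hn,
    Real.sqrt_mul n.cast_nonneg]
  ring

theorem tendsto_sqrt_mul_gbinom_div (c : ℝ) :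
    Tendsto (fun n : ℕ => √(n * Real.pi) * gbinom (2 * n + c) n / 4 ^ n) atTop (𝓝 (2 ^ c)) := by
  have hprod : Tendsto (fun n : ℕ => ∏ i ∈ range n, (1 + c * (2 * (n : ℝ) - i)⁻¹)) atTop
      (𝓝 (2 ^ c)) := by
    rw [Real.rpow_def_of_pos two_pos, mul_comm]
    refine tendsto_prod_one_add_exp ?_ (tendsto_sum_sq_div_two_mul_sub c)
    simpa only [← mul_sum] using tendsto_sum_inv_two_mul_sub.const_mul c
  have hlim := tendsto_sqrt_mul_centralBinom_div.mul hprod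
  rw [one_mul] at hlim
  refine hlim.congr fun n => ?_
  rw [gbinom_two_mul_add]
  ring

end GeneralizedBinomial

section BinomialSeries

theorem mem_eball_zero_one_of_norm_lt {E : Type*} [SeminormedAddCommGroup E] {v : E}
    (hv : ‖v‖ < 1) : v ∈ Metric.eball (0 : E) 1 := by
  rw [Metric.mem_eball, edist_zero_right, ← ofReal_norm, ← ENNReal.ofReal_one]
  exact (ENNReal.ofReal_lt_ofReal_iff one_pos).2 hv

theorem summable_norm_ringChoose_mul_pow (a : ℂ) {v : ℂ} (hv : ‖v‖ < 1) :
    Summable fun k => ‖Ring.choose a k * v ^ k‖ := by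
  simpa only [binomialSeries_apply, List.ofFn_const, List.prod_replicate, smul_eq_mul] using
    (binomialSeries ℂ a).summable_norm_apply
      (Metric.eball_subset_eball binomialSeries_radius_ge_one (mem_eball_zero_one_of_norm_lt hv))

theorem tsum_ringChoose_mul_pow (a : ℂ) {v : ℂ} (hv : ‖v‖ < 1) :
    ∑' k, Ring.choose a k * v ^ k = (1 + v) ^ a := by
  have h := (Complex.one_add_cpow_hasFPowerSeriesOnBall_zero (a := a)).hasSum
    (mem_eball_zero_one_of_norm_lt hv)
  simp only [binomialSeries_apply, List.ofFn_const, List.prod_replicate, smul_eq_mul,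
    zero_add] at h
  exact h.tsum_eq

open PowerSeries hiding binomialSeries

/-- The Taylor series at `0` of `v ↦ (1 - v) ^ (-a) * (1 + v) ^ (-b)`. -/
noncomputable def jacobiLimitSeries (a b : ℂ) : ℂ⟦X⟧ :=
  rescale (-1) (PowerSeries.binomialSeries ℂ (-a)) * PowerSeries.binomialSeries ℂ (-b)

theorem tsum_coeff_jacobiLimitSeries_mul_pow (a b : ℂ) {v : ℂ} (hv : ‖v‖ < 1) :
    ∑' k, coeff k (jacobiLimitSeries a b) * v ^ k = (1 - v) ^ (-a) * (1 + v) ^ (-b) := by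
  have hv' : ‖-v‖ < 1 := by rwa [norm_neg]
  rw [sub_eq_add_neg, ← tsum_ringChoose_mul_pow (-a) hv', ← tsum_ringChoose_mul_pow (-b) hv,
    tsum_mul_tsum_eq_tsum_sum_antidiagonal_of_summable_norm
      (summable_norm_ringChoose_mul_pow (-a) hv') (summable_norm_ringChoose_mul_pow (-b) hv)]
  refine tsum_congr fun k => ?_
  rw [jacobiLimitSeries, coeff_mul, sum_mul]
  refine sum_congr rfl fun ij hij => ?_
  rw [coeff_rescale, binomialSeries_coeff, binomialSeries_coeff, ← mem_antidiagonal.1 hij,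
    pow_add, neg_pow v, smul_eq_mul, smul_eq_mul]
  ring

theorem one_sub_C_mul_X_mul_derivative_eq {R : Type*} [CommRing R] {f : R⟦X⟧} {a c : R}
    (hf : ∀ k : ℕ, (k + 1) * coeff (k + 1) f = (a + c * k) * coeff k f) :
    (1 - C c * X) * d⁄dX R f = C a * f := by
  ext k
  rw [sub_mul, one_mul, mul_assoc, map_sub, coeff_C_mul, coeff_C_mul, coeff_derivative]
  cases k with
  | zero =>
    rw [coeff_zero_X_mul]
    linear_combination hf 0
  | succ k =>
    rw [coeff_succ_X_mul, coeff_derivative]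
    linear_combination (norm := (push_cast; ring)) hf (k + 1)

theorem derivative_jacobiLimitSeries (a b : ℂ) :
    (1 - X ^ 2) * d⁄dX ℂ (jacobiLimitSeries a b) =
      (C (a - b) + C (a + b) * X) * jacobiLimitSeries a b := by
  have hleft := one_sub_C_mul_X_mul_derivative_eq (a := a) (c := 1)
    (f := rescale (-1) (PowerSeries.binomialSeries ℂ (-a))) fun k => by
      rw [coeff_rescale, coeff_rescale, binomialSeries_coeff, binomialSeries_coeff, smul_eq_mul,
        smul_eq_mul]
      linear_combination (-1) ^ (k + 1) * succ_mul_ringChoose_succ (-a) k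
  have hright := one_sub_C_mul_X_mul_derivative_eq (a := -b) (c := -1)
    (f := PowerSeries.binomialSeries ℂ (-b)) fun k => by
      rw [binomialSeries_coeff, binomialSeries_coeff, smul_eq_mul, smul_eq_mul]
      linear_combination succ_mul_ringChoose_succ (-b) k
  rw [jacobiLimitSeries, Derivation.leibniz, smul_eq_mul, smul_eq_mul]
  simp only [map_one, map_neg, map_sub, map_add] at hleft hright ⊢
  linear_combination (1 + X) * PowerSeries.binomialSeries ℂ (-b) * hleft +
    (1 - X) * rescale (-1) (PowerSeries.binomialSeries ℂ (-a)) * hright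

theorem coeff_zero_jacobiLimitSeries (a b : ℂ) : coeff 0 (jacobiLimitSeries a b) = 1 := by
  rw [jacobiLimitSeries, coeff_mul, Nat.antidiagonal_zero, sum_singleton, coeff_rescale]
  simp only [binomialSeries_coeff, Ring.choose_zero_right, pow_zero, one_smul, mul_one]

theorem coeff_one_jacobiLimitSeries (a b : ℂ) : coeff 1 (jacobiLimitSeries a b) = a - b := by
  have h := congrArg (coeff 0) (derivative_jacobiLimitSeries a b)
  rw [sub_mul, one_mul, add_mul, pow_two, mul_assoc, mul_assoc (C _), map_sub, map_add,
    coeff_C_mul, coeff_C_mul, coeff_zero_X_mul, coeff_zero_X_mul, coeff_derivative,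
    coeff_zero_jacobiLimitSeries] at h
  simpa using h

theorem coeff_add_two_jacobiLimitSeries (a b : ℂ) (k : ℕ) :
    (k + 2) * coeff (k + 2) (jacobiLimitSeries a b) =
      (a - b) * coeff (k + 1) (jacobiLimitSeries a b) +
        (k + (a + b)) * coeff k (jacobiLimitSeries a b) := by
  have h := congrArg (coeff (k + 1)) (derivative_jacobiLimitSeries a b)
  rw [sub_mul, one_mul, add_mul, pow_two, mul_assoc, mul_assoc (C _), map_sub, map_add,
    coeff_C_mul, coeff_C_mul, coeff_succ_X_mul, coeff_succ_X_mul, coeff_derivative] at h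
  cases k with
  | zero =>
    rw [coeff_zero_X_mul] at h
    push_cast at h ⊢
    linear_combination h
  | succ k =>
    rw [coeff_succ_X_mul, coeff_derivative] at h
    push_cast at h ⊢
    linear_combination h

end BinomialSeries

section RecurrenceLimit

variable {y : ℕ → ℕ → ℂ} {e : ℕ → ℂ} {d s : ℂ}

theorem eventually_two_mul_add_ne_zero (c : ℂ) : ∀ᶠ n : ℕ in atTop, 2 * (n : ℂ) + c ≠ 0 := by
  filter_upwards [tendsto_natCast_atTop_atTop.eventually_gt_atTop ‖c‖] with n hn h0
  have hc : ‖c‖ = 2 * n := by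
    rw [eq_neg_of_add_eq_zero_right h0, norm_neg, norm_mul, Complex.norm_natCast,
      Complex.norm_ofNat]
  linarith [norm_nonneg c]

theorem tendsto_two_mul_add_div_two_mul_add (a b : ℂ) :
    Tendsto (fun n : ℕ => (2 * (n : ℂ) + a) / (2 * n + b)) atTop (𝓝 1) := by
  simpa only [add_comm, div_self (two_ne_zero' ℂ)] using
    tendsto_add_mul_div_add_mul_atTop_nhds a b 2 (two_ne_zero' ℂ)

theorem tendsto_of_jacobi_recurrence
    (hy₁ : ∀ n : ℕ, (2 * n - 1 + s) * y n 1 = 2 * d * n * y n 0)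
    (hy₂ : ∀ n k : ℕ, (k + 2) * (2 * n - (k + 2) + s) * y n (k + 2) =
      2 * d * (n - (k + 1)) * y n (k + 1) + (2 * n - k) * (k + s) * y n k)
    (he₁ : e 1 = d * e 0)
    (he₂ : ∀ k : ℕ, (k + 2) * e (k + 2) = d * e (k + 1) + (k + s) * e k)
    (hy₀ : Tendsto (fun n => y n 0) atTop (𝓝 (e 0))) (k : ℕ) :
    Tendsto (fun n => y n k) atTop (𝓝 (e k)) := by
  induction k using Nat.twoStepInduction with
  | zero => exact hy₀
  | one =>
    have hlim := ((tendsto_two_mul_add_div_two_mul_add 0 (s - 1)).mul hy₀).const_mul d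
    rw [one_mul, ← he₁] at hlim
    refine hlim.congr' ?_
    filter_upwards [eventually_two_mul_add_ne_zero (s - 1)] with n hn
    field_simp
    linear_combination -hy₁ n
  | more k ihk ihk' =>
    have hk : (k : ℂ) + 2 ≠ 0 := by exact_mod_cast (k + 1).succ_ne_zero
    have hlim := ((((tendsto_two_mul_add_div_two_mul_add (-2 * (k + 1)) (s - (k + 2))).mul
      ihk').const_mul d).add
        (((tendsto_two_mul_add_div_two_mul_add (-k) (s - (k + 2))).mul ihk).const_mul
          (k + s))).div_const ((k : ℂ) + 2)
    rw [one_mul, one_mul, ← he₂, mul_div_cancel_left₀ _ hk] at hlim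
    refine hlim.congr' ?_
    filter_upwards [eventually_two_mul_add_ne_zero (s - (k + 2))] with n hn
    field_simp
    linear_combination -hy₂ n k

theorem norm_le_mul_pow_of_two_step {E : Type*} [SeminormedAddCommGroup E] {x : ℕ → E} {p q M R : ℝ}
    {K N : ℕ} (hp : 0 ≤ p) (hq : 0 ≤ q) (hR : p * R + q ≤ R ^ 2) (hM : 0 ≤ M) (hR₀ : 0 ≤ R)
    (hinit : ∀ k < K + 2, ‖x k‖ ≤ M * R ^ k)
    (hstep : ∀ k, K ≤ k → k + 2 ≤ N → ‖x (k + 2)‖ ≤ p * ‖x (k + 1)‖ + q * ‖x k‖) :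
    ∀ k ≤ N, ‖x k‖ ≤ M * R ^ k := by
  intro k
  induction k using Nat.twoStepInduction with
  | zero => exact fun _ => hinit 0 (by omega)
  | one => exact fun _ => hinit 1 (by omega)
  | more k ihk ihk' =>
    intro hkN
    rcases lt_or_ge k K with hkK | hkK
    · exact hinit (k + 2) (by omega)
    calc ‖x (k + 2)‖ ≤ p * ‖x (k + 1)‖ + q * ‖x k‖ := hstep k hkK hkN
      _ ≤ p * (M * R ^ (k + 1)) + q * (M * R ^ k) := by
          gcongr
          · exact ihk' (by omega)
          · exact ihk (by omega)
      _ = (p * R + q) * (M * R ^ k) := by ring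
      _ ≤ R ^ 2 * (M * R ^ k) := by gcongr
      _ = M * R ^ (k + 2) := by ring

theorem norm_le_of_mul_eq_mul_add_mul {𝕜 : Type*} [NormedField 𝕜] {a b c x y z : 𝕜} {A p q : ℝ}
    (h : a * x = b * y + c * z) (hA : 0 < A) (ha : A ≤ ‖a‖) (hb : ‖b‖ ≤ p * A)
    (hc : ‖c‖ ≤ q * A) : ‖x‖ ≤ p * ‖y‖ + q * ‖z‖ := by
  refine le_of_mul_le_mul_left ?_ hA
  calc A * ‖x‖ ≤ ‖a * x‖ := by
        rw [norm_mul]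
        gcongr
    _ ≤ ‖b‖ * ‖y‖ + ‖c‖ * ‖z‖ := by
        rw [h, ← norm_mul, ← norm_mul]
        exact norm_add_le _ _
    _ ≤ p * A * ‖y‖ + q * A * ‖z‖ := by gcongr
    _ = A * (p * ‖y‖ + q * ‖z‖) := by ring

theorem norm_add_two_le_of_jacobi_recurrence {x : ℕ → ℂ} {n k : ℕ} {ε : ℝ} (hε : 0 ≤ ε)
    (hx : (k + 2) * (2 * n - (k + 2) + s) * x (k + 2) =
      2 * d * (n - (k + 1)) * x (k + 1) + (2 * n - k) * (k + s) * x k)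
    (hk : 2 * ‖d‖ + ‖s‖ ≤ ε * k) (hn : 2 + ‖s‖ + ε * ‖s‖ ≤ ε * n) (hn' : 1 + ‖s‖ ≤ n)
    (hkn : k + 2 ≤ n) :
    ‖x (k + 2)‖ ≤ ε * ‖x (k + 1)‖ + (1 + ε) ^ 2 * ‖x k‖ := by
  have hkn' : (k : ℝ) + 2 ≤ n := by exact_mod_cast hkn
  have hnorm (r : ℝ) (hr : 0 ≤ r) : ‖(r : ℂ)‖ = r := Complex.norm_of_nonneg hr
  have hk₂ := hnorm (k + 2) (by linarith)
  have hnk₁ := hnorm (n - (k + 1)) (by linarith)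
  have hnk₂ := norm_sub_le_norm_add ((2 * n - (k + 2) : ℝ) : ℂ) s
  rw [hnorm _ (by linarith)] at hnk₂
  have hnk := hnorm (2 * n - k) (by linarith)
  have hks := norm_add_le (k : ℂ) s
  rw [Complex.norm_natCast] at hks
  push_cast at hk₂ hnk₁ hnk₂ hnk
  set D : ℝ := 2 * n - (k + 2) - ‖s‖
  have hDpos : 0 < D := by linarith
  refine norm_le_of_mul_eq_mul_add_mul (A := (k + 2) * D) hx (by positivity) ?_ ?_ ?_
  · rw [norm_mul, hk₂]
    gcongr
  · rw [norm_mul, norm_mul, Complex.norm_ofNat, hnk₁, ← mul_assoc]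
    exact mul_le_mul (by linarith [norm_nonneg s]) (by linarith) (by linarith) (by positivity)
  · have hfac : ‖(2 * n - k : ℂ)‖ ≤ (1 + ε) * D := by
      rw [hnk]
      nlinarith
    have hfac' : ‖(k + s : ℂ)‖ ≤ (1 + ε) * (k + 2) := by linarith [norm_nonneg d]
    exact (norm_mul_le_of_le hfac hfac').trans_eq (by ring)

theorem exists_eventually_norm_le_mul_pow_of_jacobi_recurrence
    (hy₂ : ∀ n k : ℕ, (k + 2) * (2 * n - (k + 2) + s) * y n (k + 2) =
      2 * d * (n - (k + 1)) * y n (k + 1) + (2 * n - k) * (k + s) * y n k)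
    (hlim : ∀ k, Tendsto (fun n => y n k) atTop (𝓝 (e k))) {ε : ℝ} (hε : 0 < ε) (hε₁ : ε ≤ 1 / 2) :
    ∃ M, 0 ≤ M ∧ ∀ᶠ n in atTop, ∀ k ≤ n, ‖y n k‖ ≤ M * (1 + 2 * ε) ^ k := by
  obtain ⟨K, hK⟩ : ∃ K : ℕ, (2 * ‖d‖ + ‖s‖) / ε ≤ K := exists_nat_ge _
  set M : ℝ := 1 + ∑ k ∈ range (K + 2), ‖e k‖
  have hM₀ : 0 ≤ M := by positivity
  have hinit : ∀ᶠ n in atTop, ∀ k ∈ range (K + 2), ‖y n k‖ < M := by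
    refine (range (K + 2)).eventually_all.2 fun k hk => (hlim k).norm.eventually_lt_const ?_
    linarith [single_le_sum (f := fun k => ‖e k‖) (fun k _ => norm_nonneg _) hk]
  have hnat := tendsto_natCast_atTop_atTop (R := ℝ)
  refine ⟨M, hM₀, ?_⟩
  filter_upwards [hinit, (hnat.const_mul_atTop hε).eventually_ge_atTop (2 + ‖s‖ + ε * ‖s‖),
    hnat.eventually_ge_atTop (1 + ‖s‖)] with n hinit_n hn hn'
  refine norm_le_mul_pow_of_two_step (K := K) (p := ε) (q := (1 + ε) ^ 2) hε.le (sq_nonneg _)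
    (by nlinarith) hM₀ (by positivity) (fun k hk => ?_) (fun k hk hkn => ?_)
  · exact (hinit_n k (mem_range.2 hk)).le.trans
      (le_mul_of_one_le_right hM₀ (one_le_pow₀ (by linarith)))
  · have hKk : (K : ℝ) ≤ k := by exact_mod_cast hk
    exact norm_add_two_le_of_jacobi_recurrence hε.le (hy₂ n k)
      ((div_le_iff₀' hε).1 (hK.trans hKk)) hn hn' hkn

theorem norm_le_mul_pow_of_symm {E : Type*} [SeminormedAddCommGroup E] {x : ℕ → E} {n : ℕ}
    {M R : ℝ} (hM : 0 ≤ M) (hR : 1 ≤ R) (hle : ∀ k ≤ n, ‖x k‖ ≤ M * R ^ k)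
    (hsymm : ∀ k ≤ 2 * n, x (2 * n - k) = x k)
    (hzero : ∀ k, 2 * n < k → x k = 0) (k : ℕ) : ‖x k‖ ≤ M * R ^ k := by
  rcases le_or_gt k n with hkn | hnk
  · exact hle k hkn
  rcases le_or_gt k (2 * n) with hk | hk
  · rw [← hsymm k hk]
    exact (hle _ (by omega)).trans (by gcongr; omega)
  · rw [hzero k hk, norm_zero]
    positivity

theorem tendsto_tsum_of_jacobi_recurrence
    (hy₁ : ∀ n : ℕ, (2 * n - 1 + s) * y n 1 = 2 * d * n * y n 0)
    (hy₂ : ∀ n k : ℕ, (k + 2) * (2 * n - (k + 2) + s) * y n (k + 2) =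
      2 * d * (n - (k + 1)) * y n (k + 1) + (2 * n - k) * (k + s) * y n k)
    (hsymm : ∀ n, ∀ k ≤ 2 * n, y n (2 * n - k) = y n k)
    (hzero : ∀ n k, 2 * n < k → y n k = 0)
    (he₁ : e 1 = d * e 0)
    (he₂ : ∀ k : ℕ, (k + 2) * e (k + 2) = d * e (k + 1) + (k + s) * e k)
    (hy₀ : Tendsto (fun n => y n 0) atTop (𝓝 (e 0))) {v : ℂ} (hv : ‖v‖ < 1) :
    Tendsto (fun n => ∑' k, y n k * v ^ k) atTop (𝓝 (∑' k, e k * v ^ k)) := by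
  have hlim := tendsto_of_jacobi_recurrence hy₁ hy₂ he₁ he₂ hy₀
  set ε : ℝ := (1 - ‖v‖) / 2 with hε
  have hv₀ := norm_nonneg v
  obtain ⟨M, hM, hbound⟩ := exists_eventually_norm_le_mul_pow_of_jacobi_recurrence hy₂ hlim
    (ε := ε) (by linarith) (by linarith)
  have hratio : (1 + 2 * ε) * ‖v‖ < 1 := by nlinarith
  refine tendsto_tsum_of_dominated_convergence (bound := fun k => M * ((1 + 2 * ε) * ‖v‖) ^ k)
    ((summable_geometric_of_lt_one (by nlinarith) hratio).mul_left M)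
    (fun k => (hlim k).mul_const (v ^ k)) ?_
  filter_upwards [hbound] with n hn k
  rw [norm_mul, norm_pow, mul_pow, ← mul_assoc]
  gcongr
  exact norm_le_mul_pow_of_symm hM (by linarith) hn (hsymm n) (hzero n) k

end RecurrenceLimit

section JacobiPolynomial

open Polynomial

theorem eval_eq_tsum_coeff_mul_pow {R : Type*} [Semiring R] [TopologicalSpace R]
    (p : R[X]) (x : R) : p.eval x = ∑' k, p.coeff k * x ^ k := by
  rw [eval_eq_sum_range, tsum_eq_sum]
  intro k hk
  rw [coeff_eq_zero_of_natDegree_lt (by simpa using hk), zero_mul]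

theorem reflect_pow {R : Type*} [Semiring R] {p : R[X]} {N : ℕ} (hp : p.natDegree ≤ N) (k : ℕ) :
    reflect (N * k) (p ^ k) = reflect N p ^ k := by
  induction k with
  | zero => rw [mul_zero, pow_zero, pow_zero, reflect_one, pow_zero]
  | succ k ih =>
    rw [mul_add_one, pow_succ, pow_succ, reflect_mul _ _ (natDegree_pow_le_of_le k hp |>.trans
      (mul_comm k N).le) hp, ih]

theorem reflect_one_sub_X_pow_mul_one_add_X_pow {R : Type*} [CommRing R] (k m : ℕ) :
    reflect (2 * (k + m)) ((1 - X : R[X]) ^ (2 * k) * (1 + X) ^ (2 * m)) =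
      (1 - X) ^ (2 * k) * (1 + X) ^ (2 * m) := by
  have hsub : (1 - X : R[X]).natDegree ≤ 1 := by compute_degree
  have hadd : (1 + X : R[X]).natDegree ≤ 1 := by compute_degree
  have hpow_sub := reflect_pow hsub (2 * k)
  have hpow_add := reflect_pow hadd (2 * m)
  rw [one_mul, reflect_sub, reflect_one, reflect_one_X, pow_one, ← neg_sub 1 X,
    (even_two_mul k).neg_pow] at hpow_sub
  rw [one_mul, reflect_add, reflect_one, reflect_one_X, pow_one, add_comm X] at hpow_add
  rw [mul_add, reflect_mul _ _ (by simpa using natDegree_pow_le_of_le (2 * k) hsub)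
    (by simpa using natDegree_pow_le_of_le (2 * m) hadd), hpow_sub, hpow_add]

section Operator

variable {R : Type*} [CommRing R]

/-- The Euler operator `X d/dX` on polynomials, diagonal in the monomial basis. -/
noncomputable def eulerOperator (R : Type*) [CommRing R] : R[X] →ₗ[R] R[X] :=
  LinearMap.mulLeft R X ∘ₗ derivative

theorem eulerOperator_apply (p : R[X]) : eulerOperator R p = X * derivative p := rfl

theorem coeff_eulerOperator (p : R[X]) (k : ℕ) :
    (eulerOperator R p).coeff k = k * p.coeff k := by
  rw [eulerOperator_apply]
  cases k with
  | zero => rw [coeff_X_mul_zero, Nat.cast_zero, zero_mul]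
  | succ k => rw [coeff_X_mul, coeff_derivative, Nat.cast_succ, mul_comm]

/-- The operator `θ (θ - 2 N - s) - 2 d X (θ - N) - X² (θ - 2 N) (θ + s)`, where `θ` is the Euler
operator. With `N = n`, `d = α - β` and `s = α + β + 1`, the Jacobi differential equation for
`P` at `(u + u⁻¹) / 2` says that it annihilates `u⁻ⁿ P` as a polynomial in `X = u⁻¹`. -/
noncomputable def jacobiOperator (N d s : R) : R[X] →ₗ[R] R[X] :=
  letI θ : Module.End R R[X] := eulerOperator R
  letI x : Module.End R R[X] := LinearMap.mulLeft R X
  θ * (θ - (2 * N + s) • 1) - (2 * d) • (x * (θ - N • 1)) -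
    x * x * (θ - (2 * N) • 1) * (θ + s • 1)

theorem jacobiOperator_apply (N d s : R) (p : R[X]) :
    jacobiOperator N d s p =
      eulerOperator R (eulerOperator R p - (2 * N + s) • p) -
        (2 * d) • (X * (eulerOperator R p - N • p)) -
        X * (X * (eulerOperator R (eulerOperator R p + s • p) -
          (2 * N) • (eulerOperator R p + s • p))) :=
  rfl

theorem coeff_one_jacobiOperator (N d s : R) (p : R[X]) :
    (jacobiOperator N d s p).coeff 1 =
      (1 - 2 * N - s) * p.coeff 1 + 2 * d * N * p.coeff 0 := by
  have hX (q : R[X]) : (X * q).coeff 1 = q.coeff 0 := coeff_X_mul q 0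
  rw [jacobiOperator_apply]
  simp only [coeff_sub, coeff_smul, coeff_eulerOperator, smul_eq_mul, hX, coeff_X_mul_zero]
  push_cast
  ring

theorem coeff_add_two_jacobiOperator (N d s : R) (p : R[X]) (k : ℕ) :
    (jacobiOperator N d s p).coeff (k + 2) =
      (k + 2) * (k + 2 - 2 * N - s) * p.coeff (k + 2) +
        2 * d * (N - (k + 1)) * p.coeff (k + 1) - (k - 2 * N) * (k + s) * p.coeff k := by
  rw [← one_add_one_eq_two, ← add_assoc, jacobiOperator_apply]
  simp only [coeff_sub, coeff_add, coeff_smul, coeff_eulerOperator, smul_eq_mul, coeff_X_mul]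
  push_cast
  ring

theorem jacobiOperator_one_sub_X_pow_mul_one_add_X_pow (a b : R) (k m : ℕ) :
    jacobiOperator (k + m : R) (a - b) (a + b + 1) ((1 - X) ^ (2 * k) * (1 + X) ^ (2 * m)) =
      4 * X * (1 - X ^ 2) *
        (C (k * (k + a)) * ((1 - X) ^ (2 * (k - 1)) * (1 + X) ^ (2 * m)) -
          C (m * (m + b)) * ((1 - X) ^ (2 * k) * (1 + X) ^ (2 * (m - 1)))) := by
  rw [jacobiOperator_apply]
  simp only [smul_eq_C_mul, eulerOperator_apply]
  rcases k with _ | k <;> rcases m with _ | m <;>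
  · simp only [mul_add, mul_one, derivative_mul, derivative_pow, derivative_one, derivative_X,
      derivative_C, map_add, map_mul, map_sub, map_neg, map_natCast,
      Nat.cast_add, Nat.cast_mul, derivative_natCast, Nat.cast_one, Nat.cast_zero, Nat.cast_ofNat,
      map_zero, map_one, mul_zero, pow_zero, zero_mul, add_zero, zero_add, sub_zero, zero_sub,
      map_ofNat, derivative_ofNat, Nat.add_sub_cancel,
      show ∀ k : ℕ, 2 * k + 2 - 1 = 2 * k + 1 from fun k => by omega]
    ring

end Operator

section Numerator

/-- The coefficient `binom(n+α, n-k) binom(n+β, k)` of `(x-1)^k (x+1)^(n-k)` in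
`2^n P_n^{(α,β)}(x)`. -/
noncomputable def jacobiWeight (α β : ℝ) (n k : ℕ) : ℝ :=
  gbinom (n + α) (n - k) * gbinom (n + β) k

/-- The polynomial `Q` for which `P_n^{(α,β)}((u + u⁻¹)/2) = (u/4)^n Q(u⁻¹)`. -/
noncomputable def jacobiNumerator (α β : ℝ) (n : ℕ) : ℂ[X] :=
  ∑ k ∈ range (n + 1), C (jacobiWeight α β n k : ℂ) * ((1 - X) ^ (2 * k) * (1 + X) ^ (2 * (n - k)))

variable (α β : ℝ) (n : ℕ)

theorem jacobiWeight_succ {k : ℕ} (hk : k < n) :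
    (k + 1) * (k + 1 + α) * jacobiWeight α β n (k + 1) =
      (n - k) * (n - k + β) * jacobiWeight α β n k := by
  obtain ⟨m, rfl⟩ : ∃ m, n = k + m + 1 := Nat.exists_eq_add_of_lt hk
  have hα := succ_mul_ringChoose_succ ((k + m + 1 : ℕ) + α) m
  have hβ := succ_mul_ringChoose_succ ((k + m + 1 : ℕ) + β) k
  simp only [jacobiWeight, gbinom_eq_ringChoose, show k + m + 1 - (k + 1) = m by omega,
    show k + m + 1 - k = m + 1 by omega]
  push_cast at hα hβ ⊢
  linear_combination (k + 1 + α) * Ring.choose (k + m + 1 + α) m * hβ -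
    (m + 1 + β) * Ring.choose (k + m + 1 + β) k * hα

theorem jacobiOperator_jacobiNumerator :
    jacobiOperator (n : ℂ) (α - β) (α + β + 1) (jacobiNumerator α β n) = 0 := by
  set w : ℕ → ℂ := fun k => jacobiWeight α β n k with hw
  set T : ℕ → ℕ → ℂ[X] := fun k m => (1 - X) ^ (2 * k) * (1 + X) ^ (2 * m) with hT
  have hterm : ∀ k ∈ range (n + 1),
      jacobiOperator (n : ℂ) (α - β) (α + β + 1) (C (w k) * T k (n - k)) =
        4 * X * (1 - X ^ 2) * (C (k * (k + α) * w k) * T (k - 1) (n - k) -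
          C ((n - k) * (n - k + β) * w k) * T k (n - k - 1)) := fun k hk => by
    have h := jacobiOperator_one_sub_X_pow_mul_one_add_X_pow (α : ℂ) β k (n - k)
    rw [Nat.cast_sub (mem_range_succ_iff.1 hk), add_sub_cancel] at h
    rw [← smul_eq_C_mul, map_smul, h, smul_eq_C_mul]
    simp only [C_mul, hT]
    ring
  have htelescope : ∑ k ∈ range (n + 1), C (k * (k + α) * w k) * T (k - 1) (n - k) =
      ∑ k ∈ range (n + 1), C ((n - k) * (n - k + β) * w k) * T k (n - k - 1) := by
    rw [sum_range_succ', sum_range_succ]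
    simp only [Nat.cast_zero, zero_mul, C_0, sub_self, add_zero, Nat.add_sub_cancel]
    refine sum_congr rfl fun k hk => ?_
    have hweight : ((k + 1 : ℕ) * ((k + 1 : ℕ) + α) * w (k + 1) : ℂ) =
        (n - k) * (n - k + β) * w k := by
      simp only [hw]
      exact_mod_cast jacobiWeight_succ α β n (mem_range.1 hk)
    rw [hweight, Nat.sub_sub]
  rw [jacobiNumerator, map_sum, sum_congr rfl hterm, ← mul_sum, sum_sub_distrib, htelescope,
    sub_self, mul_zero]

theorem coeff_one_jacobiNumerator :
    (2 * n - 1 + (α + β + 1)) * (jacobiNumerator α β n).coeff 1 =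
      2 * (α - β) * n * (jacobiNumerator α β n).coeff 0 := by
  have h := coeff_one_jacobiOperator (n : ℂ) (α - β) (α + β + 1) (jacobiNumerator α β n)
  rw [jacobiOperator_jacobiNumerator, coeff_zero] at h
  linear_combination h

theorem coeff_add_two_jacobiNumerator (k : ℕ) :
    (k + 2) * (2 * n - (k + 2) + (α + β + 1)) * (jacobiNumerator α β n).coeff (k + 2) =
      2 * (α - β) * (n - (k + 1)) * (jacobiNumerator α β n).coeff (k + 1) +
        (2 * n - k) * (k + (α + β + 1)) * (jacobiNumerator α β n).coeff k := by
  have h := coeff_add_two_jacobiOperator (n : ℂ) (α - β) (α + β + 1) (jacobiNumerator α β n) k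
  rw [jacobiOperator_jacobiNumerator, coeff_zero] at h
  linear_combination h

theorem coeff_zero_jacobiNumerator :
    (jacobiNumerator α β n).coeff 0 = gbinom (2 * n + (α + β)) n := by
  rw [show 2 * (n : ℝ) + (α + β) = n + α + (n + β) by ring, ← sum_gbinom_mul_gbinom,
    jacobiNumerator, coeff_zero_eq_eval_zero, eval_finsetSum, Complex.ofReal_sum]
  refine sum_congr rfl fun k _ => ?_
  simp [jacobiWeight]

theorem natDegree_jacobiNumerator_le : (jacobiNumerator α β n).natDegree ≤ 2 * n := by
  refine natDegree_sum_le_of_forall_le _ _ fun k hk => ?_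
  have hk' := mem_range_succ_iff.1 hk
  have hdeg : (C (jacobiWeight α β n k : ℂ) *
      ((1 - X) ^ (2 * k) * (1 + X) ^ (2 * (n - k)))).natDegree ≤ 2 * k + 2 * (n - k) := by
    compute_degree
  omega

theorem coeff_two_mul_sub_jacobiNumerator {k : ℕ} (hk : k ≤ 2 * n) :
    (jacobiNumerator α β n).coeff (2 * n - k) = (jacobiNumerator α β n).coeff k := by
  simp only [jacobiNumerator, finsetSum_coeff, coeff_C_mul]
  refine sum_congr rfl fun j hj => ?_
  have h := reflect_one_sub_X_pow_mul_one_add_X_pow (R := ℂ) j (n - j)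
  rw [Nat.add_sub_cancel' (mem_range_succ_iff.1 hj)] at h
  rw [← revAt_le hk, ← coeff_reflect, h]

theorem jacobiC_joukowski {u : ℂ} (hu : u ≠ 0) :
    jacobiC α β n ((u + u⁻¹) / 2) = (u / 4) ^ n * (jacobiNumerator α β n).eval u⁻¹ := by
  have hsub : (u + u⁻¹) / 2 - 1 = u / 2 * (1 - u⁻¹) ^ 2 := by field_simp; ring
  have hadd : (u + u⁻¹) / 2 + 1 = u / 2 * (1 + u⁻¹) ^ 2 := by field_simp; ring
  rw [jacobiC, jacobiNumerator, eval_finsetSum, mul_sum, mul_sum]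
  refine sum_congr rfl fun k hk => ?_
  have hpow : (u / 4) ^ n = 1 / 2 ^ n * ((u / 2) ^ k * (u / 2) ^ (n - k)) := by
    rw [← pow_add, Nat.add_sub_cancel' (mem_range_succ_iff.1 hk), one_div, ← inv_pow, ← mul_pow]
    congr 1
    ring
  simp only [eval_mul, eval_C, eval_pow, eval_sub, eval_add, eval_one, eval_X]
  rw [hsub, hadd, hpow, jacobiWeight, mul_pow, mul_pow, ← pow_mul, ← pow_mul]
  ring

end Numerator

end JacobiPolynomial

theorem tendsto_coeff_zero_jacobiNumerator (α β : ℝ) :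
    Tendsto (fun n : ℕ => (√(n * Real.pi) : ℂ) / (2 ^ (α + β : ℂ) * 4 ^ n) *
      (jacobiNumerator α β n).coeff 0) atTop (𝓝 1) := by
  have hne : (2 : ℝ) ^ (α + β) ≠ 0 := by positivity
  have hlim := (tendsto_sqrt_mul_gbinom_div (α + β)).div_const (2 ^ (α + β))
  rw [div_self hne] at hlim
  have hlim' := (Complex.continuous_ofReal.tendsto 1).comp hlim
  rw [Complex.ofReal_one] at hlim'
  refine hlim'.congr fun n => ?_
  rw [Function.comp_apply, coeff_zero_jacobiNumerator]
  push_cast [Complex.ofReal_cpow two_pos.le]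
  ring

theorem tendsto_tsum_coeff_jacobiNumerator (α β : ℝ) {v : ℂ} (hv : ‖v‖ < 1) :
    Tendsto (fun n : ℕ => ∑' k, (√(n * Real.pi) : ℂ) / (2 ^ (α + β : ℂ) * 4 ^ n) *
      (jacobiNumerator α β n).coeff k * v ^ k) atTop
      (𝓝 ((1 - v) ^ (-(α : ℂ) - 1 / 2) * (1 + v) ^ (-(β : ℂ) - 1 / 2))) := by
  rw [← neg_add', ← neg_add', ← tsum_coeff_jacobiLimitSeries_mul_pow _ _ hv]
  refine tendsto_tsum_of_jacobi_recurrence (d := α - β) (s := α + β + 1)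
    (fun n => ?_) (fun n k => ?_) (fun n k hk => ?_) (fun n k hk => ?_) ?_ (fun k => ?_) ?_ hv
  · linear_combination
      (√(n * Real.pi) : ℂ) / (2 ^ (α + β : ℂ) * 4 ^ n) * coeff_one_jacobiNumerator α β n
  · linear_combination
      (√(n * Real.pi) : ℂ) / (2 ^ (α + β : ℂ) * 4 ^ n) * coeff_add_two_jacobiNumerator α β n k
  · rw [coeff_two_mul_sub_jacobiNumerator α β n hk]
  · rw [Polynomial.coeff_eq_zero_of_natDegree_lt
      ((natDegree_jacobiNumerator_le α β n).trans_lt hk), mul_zero]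
  · rw [coeff_one_jacobiLimitSeries, coeff_zero_jacobiLimitSeries]
    ring
  · linear_combination coeff_add_two_jacobiLimitSeries (α + 1 / 2 : ℂ) (β + 1 / 2) k
  · rw [coeff_zero_jacobiLimitSeries]
    exact tendsto_coeff_zero_jacobiNumerator α β

theorem jacobi_limit_on_bernstein_ellipse_general (α β : ℝ) {u : ℂ} (hu : 1 < ‖u‖) :
    Tendsto (fun n : ℕ => (√(n * Real.pi) : ℂ) * jacobiC α β n ((u + u⁻¹) / 2) /
        (2 ^ (α + β : ℂ) * u ^ n)) atTop
      (𝓝 ((1 - u⁻¹) ^ (-(α : ℂ) - 1 / 2) * (1 + u⁻¹) ^ (-(β : ℂ) - 1 / 2))) := by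
  have hu₀ : u ≠ 0 := norm_pos_iff.1 (one_pos.trans hu)
  have hv : ‖u⁻¹‖ < 1 := by
    rw [norm_inv]
    exact inv_lt_one_of_one_lt₀ hu
  refine (tendsto_tsum_coeff_jacobiNumerator α β hv).congr fun n => ?_
  simp only [mul_assoc, tsum_mul_left]
  rw [← eval_eq_tsum_coeff_mul_pow, jacobiC_joukowski α β n hu₀, div_pow]
  field_simp

/-- for `α, β > -1` and `|u| = ρ > 1` with `z = (u + u⁻¹)/2`,
`√(nπ) P_n^{(α,β)}(z) / (2^{α+β} u^n) → (1 - u⁻¹)^{-α-1/2} (1 + u⁻¹)^{-β-1/2}` as `n → ∞`,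
complex powers being principal. -/
theorem jacobi_limit_on_bernstein_ellipse
    (α β : ℝ) (hα : -1 < α) (hβ : -1 < β) (ρ : ℝ) (hρ : 1 < ρ)
    (u : ℂ) (hu : ‖u‖ = ρ) :
    Filter.Tendsto
      (fun n : ℕ => ((Real.sqrt (n * Real.pi) : ℝ) : ℂ) * jacobiC α β n ((u + u⁻¹) / 2) /
        ((2 : ℂ) ^ ((α : ℂ) + (β : ℂ)) * u ^ n))
      Filter.atTop
      (nhds ((1 - u⁻¹) ^ (-(α : ℂ) - 1/2) * (1 + u⁻¹) ^ (-(β : ℂ) - 1/2))) :=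
  jacobi_limit_on_bernstein_ellipse_general α β (hu ▸ hρ)
end
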